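/- arXiv:2301.04932 — 4 statements merged into one kernel-verified Lean document; each statement's English description precedes it below -/
import Mathlib

section
/- Let $k$ be a field, let $n \geq 1$, let $a_1, \dots, a_n$ and $\alpha_1, \dots, \alpha_n$ be positive integers, and set $N + 1 = \prod_{i=1}^{n} \binom{a_i + \alpha_i}{\alpha_i}$. Suppose $A_0$ is a $\beta \times \alpha$ matrix and $B_0$ is a $\gamma \times \beta$ matrix whose entries are homogeneous linear forms in $N+1$ variables $z_0, \dots, z_N$ over $k$, such that $B_0 A_0 = 0$ and for every $w \in k^{N+1} \setminus \{0\}$ the evaluated matrices $A_0(w)$ and $B_0(w)$ have ranks $\alpha$ and $\gamma$ respectively. Let $\bar{A}$ and $\bar{B}$ be obtained from $A_0$ and $B_0$ by substituting for $z_0, \dots, z_N$ the $N+1$ monomials of multidegree $(\alpha_1, \dots, \alpha_n)$ in the $n$ groups of variables $x_{i,0}, \dots, x_{i,a_i}$ ($1 \leq i \leq n$). Then the entries of $\bar{A}$ and $\bar{B}$ are multihomogeneous of multidegree $(\alpha_1, \dots, \alpha_n)$, $\bar{B} \cdot \bar{A} = 0$, and for every tuple $(v_1, \dots, v_n)$ with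 each $v_i \in k^{a_i+1} \setminus \{0\}$ the evaluated matrices $\bar{A}(v_1, \dots, v_n)$ and $\bar{B}(v_1, \dots, v_n)$ have ranks $\alpha$ and $\gamma$ respectively. -/
theorem aeval_isWeightedHomogeneous_of_linear {k σ τ : Type} [Field k] [Fintype τ]
    (w : σ → ℕ) (m : ℕ) (f : τ → MvPolynomial σ k)
    (hf : ∀ t, MvPolynomial.IsWeightedHomogeneous w (f t) m)
    (p : MvPolynomial τ k) (hp : p.IsHomogeneous 1) :
    MvPolynomial.IsWeightedHomogeneous w (MvPolynomial.aeval f p) m := by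
  classical
  rw [MvPolynomial.aeval_def, MvPolynomial.eval₂_eq]
  refine MvPolynomial.IsWeightedHomogeneous.sum _ _ _ fun e he => ?_
  have h1 : e.degree = 1 := by
    have := hp (MvPolynomial.mem_support_iff.mp he)
    rw [Finsupp.degree_eq_weight_one]
    exact this
  have h2 : MvPolynomial.IsWeightedHomogeneous w (∏ i ∈ e.support, f i ^ e i)
      (∑ i ∈ e.support, e i • m) :=
    MvPolynomial.IsWeightedHomogeneous.prod _ _ _ fun i _ => (hf i).pow (e i)
  have h3 : (∑ i ∈ e.support, e i • m) = m := by
    rw [← Finset.sum_smul]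
    have : (∑ i ∈ e.support, e i) = 1 := h1
    rw [this, one_smul]
  rw [h3] at h2
  have h4 := (MvPolynomial.isWeightedHomogeneous_C (R := k) w (MvPolynomial.coeff e p)).mul h2
  rw [zero_add] at h4
  exact h4

/-- **Pullback of a linear monad along the Segre–Veronese embedding.**
If `A₀`, `B₀` are matrices of linear forms in `N+1` variables with `B₀A₀ = 0` and of
maximal rank at every nonzero point of `k^{N+1}`, then substituting the `N+1` monomials
of multidegree `(α_1,…,α_n)` for the variables yields matrices `Ā`, `B̄` whose entries
are multihomogeneous of multidegree `(α_1,…,α_n)`, with `B̄Ā = 0`, of maximal ranks `α`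
resp. `γ` at every tuple of nonzero vectors. -/
theorem monad_pullback_segreVeronese
    (k : Type) [Field k]
    (n : ℕ) (hn : 1 ≤ n)
    (a d : Fin n → ℕ) (ha : ∀ i, 0 < a i) (hd : ∀ i, 0 < d i)
    (N : ℕ) (hN : N + 1 = ∏ i, (a i + d i).choose (d i))
    (α β γ : ℕ)
    (A₀ : Matrix (Fin β) (Fin α) (MvPolynomial (Fin (N + 1)) k))
    (B₀ : Matrix (Fin γ) (Fin β) (MvPolynomial (Fin (N + 1)) k))
    (hA₀ : ∀ i j, (A₀ i j).IsHomogeneous 1)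
    (hB₀ : ∀ i j, (B₀ i j).IsHomogeneous 1)
    (hBA : B₀ * A₀ = 0)
    (hrank : ∀ w : Fin (N + 1) → k, w ≠ 0 →
      (A₀.map (MvPolynomial.eval w)).rank = α ∧ (B₀.map (MvPolynomial.eval w)).rank = γ)
    -- `mons` enumerates (bijectively) the monic monomials of multidegree `(α_1,…,α_n)`
    (mons : Fin (N + 1) → MvPolynomial (Σ i : Fin n, Fin (a i + 1)) k)
    (hmons_inj : Function.Injective mons)
    (hmons_range : ∀ p : MvPolynomial (Σ i : Fin n, Fin (a i + 1)) k,
      (∃ t, mons t = p) ↔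
      ∃ e : (Σ i : Fin n, Fin (a i + 1)) →₀ ℕ,
        p = MvPolynomial.monomial e 1 ∧
        ∀ i : Fin n, (∑ s : Fin (a i + 1), e ⟨i, s⟩) = d i) :
    (∀ i j (l : Fin n), MvPolynomial.IsWeightedHomogeneous
        (fun v : Σ i : Fin n, Fin (a i + 1) => if v.1 = l then 1 else 0)
        ((A₀.map (MvPolynomial.aeval mons)) i j) (d l)) ∧
    (∀ i j (l : Fin n), MvPolynomial.IsWeightedHomogeneous
        (fun v : Σ i : Fin n, Fin (a i + 1) => if v.1 = l then 1 else 0)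
        ((B₀.map (MvPolynomial.aeval mons)) i j) (d l)) ∧
    (B₀.map (MvPolynomial.aeval mons)) * (A₀.map (MvPolynomial.aeval mons)) = 0 ∧
    (∀ v : (i : Fin n) → Fin (a i + 1) → k, (∀ i, v i ≠ 0) →
      ((A₀.map (MvPolynomial.aeval mons)).map
        (MvPolynomial.eval (fun p => v p.1 p.2))).rank = α ∧
      ((B₀.map (MvPolynomial.aeval mons)).map
        (MvPolynomial.eval (fun p => v p.1 p.2))).rank = γ) := by
  classical
  have hm : ∀ (l : Fin n) t, MvPolynomial.IsWeightedHomogeneous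
      (fun v : Σ i : Fin n, Fin (a i + 1) => if v.1 = l then 1 else 0) (mons t) (d l) := by
    intro l t
    obtain ⟨e, he, hs⟩ := (hmons_range (mons t)).1 ⟨t, rfl⟩
    rw [he]
    apply MvPolynomial.isWeightedHomogeneous_monomial
    rw [Finsupp.weight_apply, Finsupp.sum_fintype _ _ (by simp), ← hs l, Fintype.sum_sigma,
      Finset.sum_eq_single l]
    · simp
    · intro b _ hb
      simp [hb]
    · simp
  refine ⟨fun i j l => aeval_isWeightedHomogeneous_of_linear _ _ _ (hm l) _ (hA₀ i j),
    fun i j l => aeval_isWeightedHomogeneous_of_linear _ _ _ (hm l) _ (hB₀ i j), ?_, ?_⟩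
  · have := congrArg (fun M => M.map (MvPolynomial.aeval (R := k) mons)) hBA
    simpa [Matrix.map_mul] using this
  · intro v hv
    have key : ∀ p : MvPolynomial (Fin (N + 1)) k,
        MvPolynomial.eval (fun p : (Σ i : Fin n, Fin (a i + 1)) => v p.1 p.2)
          (MvPolynomial.aeval mons p) =
        MvPolynomial.eval (fun t => MvPolynomial.eval (fun p => v p.1 p.2) (mons t)) p := by
      intro p
      induction p using MvPolynomial.induction_on with
      | C c => simp
      | add p q hp hq => rw [map_add, map_add, map_add, hp, hq]
      | mul_X p i hp => rw [map_mul, map_mul, map_mul, hp, MvPolynomial.aeval_X, MvPolynomial.eval_X]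
    have hw : (fun t => MvPolynomial.eval
        (fun p : (Σ i : Fin n, Fin (a i + 1)) => v p.1 p.2) (mons t)) ≠ 0 := by
      have hs : ∀ i, ∃ s, v i s ≠ 0 := fun i => Function.ne_iff.mp (hv i)
      choose s hs using hs
      let e : (Σ i : Fin n, Fin (a i + 1)) →₀ ℕ :=
        Finsupp.equivFunOnFinite.symm (fun p => if p.2 = s p.1 then d p.1 else 0)
      obtain ⟨t, ht⟩ := (hmons_range (MvPolynomial.monomial e 1)).2
        ⟨e, rfl, fun i => by simp [e]⟩
      intro h0
      have h1 := congrFun h0 t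
      simp only [ht, MvPolynomial.eval_monomial, one_mul, Pi.zero_apply] at h1
      rw [Finsupp.prod, Finset.prod_eq_zero_iff] at h1
      obtain ⟨⟨i, r⟩, hq, h2⟩ := h1
      have h3 : r = s i := by
        by_contra hne
        simp [e, hne] at hq
      subst h3
      exact hs i (pow_eq_zero_iff (Finsupp.mem_support_iff.mp hq) |>.1 h2)
    have := hrank _ hw
    simp only [Matrix.map_map]
    convert this using 4 <;> first | exact funext key | (ext; simp [key])
end

section
/- Let $k$ be a field, let $n \geq 0$ and $\kappa \geq 1$ be integers, and let $x_0, \dots, x_n, y_0, \dots, y_n \in k$ with $(x_0, \dots, x_n, y_0, \dots, y_n) \neq 0$. Then the $\kappa \times (2n+2\kappa)$ banded matrix $B(x,y)$ has rank $\kappa$, i.e., it is surjective as a linear map $k^{2n+2\kappa} \to k^{\kappa}$. -/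
/-- The `κ × (2n+2κ)` banded matrix `B(x,y)` of the Spindler–Trautmann monad:
`B i j = x (j-i)` if `j ≤ n+κ-1` and `0 ≤ j-i ≤ n`;
`B i j = y (j-(n+κ)-i)` if `j ≥ n+κ` and `0 ≤ j-(n+κ)-i ≤ n`; and `0` otherwise. -/
def spindlerTrautmannB {R : Type} [CommRing R] (n κ : ℕ) (x y : Fin (n + 1) → R) :
    Matrix (Fin κ) (Fin (2 * n + 2 * κ)) R :=
  Matrix.of fun i j =>
    if h : (j : ℕ) < n + κ ∧ (i : ℕ) ≤ (j : ℕ) ∧ (j : ℕ) - (i : ℕ) ≤ n then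
      x ⟨(j : ℕ) - (i : ℕ), by omega⟩
    else if h' : n + κ ≤ (j : ℕ) ∧ (i : ℕ) ≤ (j : ℕ) - (n + κ) ∧
        (j : ℕ) - (n + κ) - (i : ℕ) ≤ n then
      y ⟨(j : ℕ) - (n + κ) - (i : ℕ), by omega⟩
    else 0

theorem rows_independent_of_pivots {k : Type} [Field k] {κ m : ℕ}
    (B : Matrix (Fin κ) (Fin m) k) (c : Fin κ → Fin m)
    (h1 : ∀ i, B i (c i) ≠ 0) (h2 : ∀ i i', i < i' → B i' (c i) = 0) :
    LinearIndependent k B.row := by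
  rw [Fintype.linearIndependent_iff]
  intro g hg i
  induction i using WellFoundedLT.induction with
  | _ i ih =>
    have h := congrFun hg (c i)
    simp only [Finset.sum_apply, Pi.smul_apply, smul_eq_mul, Pi.zero_apply, Matrix.row] at h
    rw [Finset.sum_eq_single i] at h
    · exact (mul_eq_zero.mp h).resolve_right (h1 i)
    · intro b _ hb
      rcases lt_or_gt_of_ne hb with hlt | hgt
      · rw [ih b hlt, zero_mul]
      · rw [h2 i b hgt, mul_zero]
    · intro hi
      exact absurd (Finset.mem_univ i) hi

theorem exists_first_nonzero {k : Type} [Field k] {n : ℕ} (x : Fin (n + 1) → k) (hx : x ≠ 0) :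
    ∃ d, x d ≠ 0 ∧ ∀ e, e < d → x e = 0 := by
  obtain ⟨a, ha⟩ := Function.ne_iff.mp hx
  obtain ⟨d, hd, hmin⟩ := WellFounded.has_min (wellFounded_lt (α := Fin (n + 1)))
    {d | x d ≠ 0} ⟨a, ha⟩
  refine ⟨d, hd, fun e he => ?_⟩
  by_contra hne
  exact hmin e hne he

/-- **Surjectivity of `B(x,y)` at nonzero points.** If `(x, y) ≠ 0` then the banded
matrix `B(x,y)` has rank `κ`, i.e. it is surjective as a linear map
`k^{2n+2κ} → k^κ`. -/
theorem spindlerTrautmannB_rank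
    (k : Type) [Field k] (n κ : ℕ) (hκ : 1 ≤ κ) (x y : Fin (n + 1) → k)
    (hxy : ¬(x = 0 ∧ y = 0)) :
    (spindlerTrautmannB n κ x y).rank = κ ∧
    Function.Surjective (spindlerTrautmannB n κ x y).mulVecLin := by
  have hli : LinearIndependent k (spindlerTrautmannB n κ x y).row := by
    by_cases hx : x = 0
    · have hy : y ≠ 0 := fun hy => hxy ⟨hx, hy⟩
      obtain ⟨d, hd, hmin⟩ := exists_first_nonzero y hy
      refine rows_independent_of_pivots _
        (fun i => ⟨n + κ + (i : ℕ) + (d : ℕ), by omega⟩) ?_ ?_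
      · intro i
        have hn : ¬ (n + κ + (i : ℕ) + (d : ℕ) < n + κ) := by omega
        have e : n + κ + (i : ℕ) + (d : ℕ) - (n + κ) - (i : ℕ) = d := by omega
        simp only [spindlerTrautmannB, Matrix.of_apply]
        rw [dif_neg (by omega), dif_pos (by omega)]
        simpa only [e] using hd
      · intro i i' hi
        have hi' : (i : ℕ) < i' := hi
        simp only [spindlerTrautmannB, Matrix.of_apply]
        rw [dif_neg (by omega)]
        split_ifs with h
        · exact hmin _ (Fin.lt_def.mpr (by simp only; omega))
        · rfl
    · obtain ⟨d, hd, hmin⟩ := exists_first_nonzero x hx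
      refine rows_independent_of_pivots _
        (fun i => ⟨(i : ℕ) + (d : ℕ), by omega⟩) ?_ ?_
      · intro i
        have e : (i : ℕ) + (d : ℕ) - (i : ℕ) = d := by omega
        simp only [spindlerTrautmannB, Matrix.of_apply]
        rw [dif_pos (by omega)]
        simpa only [e] using hd
      · intro i i' hi
        have hi' : (i : ℕ) < i' := hi
        simp only [spindlerTrautmannB, Matrix.of_apply]
        split_ifs with h h'
        · exact hmin _ (Fin.lt_def.mpr (by simp only; omega))
        · omega
        · rfl
  have hr : (spindlerTrautmannB n κ x y).rank = κ := by
    simpa using hli.rank_matrix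
  refine ⟨hr, ?_⟩
  rw [← LinearMap.range_eq_top]
  apply Submodule.eq_top_of_finrank_eq
  rw [Module.finrank_fin_fun]
  exact hr
end

section
/- Let $k$ be a field, let $n \geq 0$ and $\kappa \geq 1$ be integers, and let $x_0, \dots, x_n, y_0, \dots, y_n \in k$ with $(x_0, \dots, x_n, y_0, \dots, y_n) \neq 0$. Then the $(2n+2\kappa) \times \kappa$ banded matrix $A(x,y)$ has rank $\kappa$, i.e., it is injective as a linear map $k^{\kappa} \to k^{2n+2\kappa}$. -/
/-- The `(2n+2κ) × κ` banded matrix `A(x,y)` of the Spindler–Trautmann monad: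
`A i j = -y (i-j)` if `i ≤ n+κ-1` and `0 ≤ i-j ≤ n`;
`A i j = x (i-(n+κ)-j)` if `i ≥ n+κ` and `0 ≤ i-(n+κ)-j ≤ n`; and `0` otherwise. -/
def spindlerTrautmannA {R : Type} [CommRing R] (n κ : ℕ) (x y : Fin (n + 1) → R) :
    Matrix (Fin (2 * n + 2 * κ)) (Fin κ) R :=
  Matrix.of fun i j =>
    if h : (i : ℕ) < n + κ ∧ (j : ℕ) ≤ (i : ℕ) ∧ (i : ℕ) - (j : ℕ) ≤ n then
      -y ⟨(i : ℕ) - (j : ℕ), by omega⟩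
    else if h' : n + κ ≤ (i : ℕ) ∧ (j : ℕ) ≤ (i : ℕ) - (n + κ) ∧
        (i : ℕ) - (n + κ) - (j : ℕ) ≤ n then
      x ⟨(i : ℕ) - (n + κ) - (j : ℕ), by omega⟩
    else 0

/-- A banded convolution matrix with a nonzero symbol is injective. -/
theorem band_injective {k : Type} [Field k] (n κ : ℕ) (z : Fin (n + 1) → k) (hz : z ≠ 0)
    (v : Fin κ → k)
    (h : ∀ m : ℕ, m < n + κ → ∑ j : Fin κ,
      (if h : (j : ℕ) ≤ m ∧ m - (j : ℕ) ≤ n then z ⟨m - (j : ℕ), by omega⟩ else 0) * v j = 0) :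
    v = 0 := by
  classical
  by_contra hv
  obtain ⟨p0, hp0⟩ := Function.ne_iff.mp hz
  obtain ⟨j0, hj0⟩ := Function.ne_iff.mp hv
  obtain ⟨p, hp, hpm⟩ := WellFounded.has_min (wellFounded_lt (α := Fin (n + 1)))
    {p | z p ≠ 0} ⟨p0, hp0⟩
  obtain ⟨j, hj, hjm⟩ := WellFounded.has_min (wellFounded_lt (α := Fin κ))
    {j | v j ≠ 0} ⟨j0, hj0⟩
  have hs := h (p + j) (by omega)
  rw [Finset.sum_eq_single j] at hs
  · have hc : (j : ℕ) ≤ (p : ℕ) + j ∧ (p : ℕ) + j - (j : ℕ) ≤ n := by omega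
    rw [dif_pos hc] at hs
    have e : (⟨(p : ℕ) + j - (j : ℕ), by omega⟩ : Fin (n + 1)) = p := by
      ext; simp
    rw [e] at hs
    exact (mul_ne_zero hp hj) hs
  · intro b _ hb
    by_cases hlt : b < j
    · have : v b = 0 := by
        by_contra hvb
        exact hjm b hvb hlt
      rw [this, mul_zero]
    · have hgt : (j : ℕ) < b := by
        have : (b : ℕ) ≠ j := fun e => hb (Fin.ext e)
        have : ¬ (b : ℕ) < j := hlt
        omega
      split_ifs with hc
      · have : z ⟨(p : ℕ) + j - (b : ℕ), by omega⟩ = 0 := by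
          by_contra hzb
          refine hpm _ hzb ?_
          rw [Fin.lt_def]
          show (p : ℕ) + j - (b : ℕ) < p
          omega
        rw [this, zero_mul]
      · rw [zero_mul]
  · intro hj'
    exact absurd (Finset.mem_univ j) hj'

/-- **Injectivity of `A(x,y)` at nonzero points.** If `(x, y) ≠ 0` then the banded
matrix `A(x,y)` has rank `κ`, i.e. it is injective as a linear map
`k^κ → k^{2n+2κ}`. -/
theorem spindlerTrautmannA_rank
    (k : Type) [Field k] (n κ : ℕ) (hκ : 1 ≤ κ) (x y : Fin (n + 1) → k)
    (hxy : ¬(x = 0 ∧ y = 0)) :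
    (spindlerTrautmannA n κ x y).rank = κ ∧
    Function.Injective (spindlerTrautmannA n κ x y).mulVecLin := by
  have hinj : Function.Injective (spindlerTrautmannA n κ x y).mulVecLin := by
    rw [← LinearMap.ker_eq_bot, LinearMap.ker_eq_bot']
    intro v hv
    have hrow : ∀ i, ∑ j, spindlerTrautmannA n κ x y i j * v j = 0 := fun i => congrFun hv i
    by_cases hy : y = 0
    · have hx : x ≠ 0 := fun hx => hxy ⟨hx, hy⟩
      refine band_injective n κ x hx v fun m hm => ?_
      refine Eq.trans ?_ (hrow ⟨n + κ + m, by omega⟩)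
      refine Finset.sum_congr rfl fun j _ => ?_
      congr 1
      have h1 : ¬ (n + κ + m < n + κ) := by omega
      have h2 : n + κ ≤ n + κ + m := by omega
      simp only [spindlerTrautmannA, Matrix.of_apply, h1, h2, true_and, false_and, dite_false,
        Nat.add_sub_cancel_left]
    · refine band_injective n κ y hy v fun m hm => ?_
      rw [← neg_eq_zero, ← Finset.sum_neg_distrib]
      refine Eq.trans ?_ (hrow ⟨m, by omega⟩)
      refine Finset.sum_congr rfl fun j _ => ?_
      rw [← neg_mul]
      congr 1
      have hm' : ¬ (n + κ ≤ m) := by omega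
      simp only [spindlerTrautmannA, Matrix.of_apply, hm, hm', true_and, false_and, dite_false]
      split_ifs <;> simp
  refine ⟨?_, hinj⟩
  rw [Matrix.rank, LinearMap.finrank_range_of_inj hinj]
  simp
end

section
/- Let $k$ be a field, let $m \geq 1$ and $\kappa \geq 1$ be integers, and set $n = 2^{m-1} - 1$. In the polynomial ring over $k$ in the $2m$ variables $\alpha_{1,0}, \alpha_{1,1}, \dots, \alpha_{m,0}, \alpha_{m,1}$, define for each $0 \leq j \leq n$, writing $j$ in binary as $j = \sum_{l=2}^{m} b_l(j)\, 2^{m-l}$ with digits $b_l(j) \in \{0,1\}$, the multidegree-$(1,\dots,1)$ monomials $x_j = \alpha_{1,0} \prod_{l=2}^{m} \alpha_{l, b_l(j)}$ and $y_j = \alpha_{1,1} \prod_{l=2}^{m} \alpha_{l, b_l(j)}$. Let $\overline{B} = B(x,y)$ and $\overline{A} = A(x,y)$ be the associated banded matrices of sizes $\kappa \times (2n+2\kappa)$ and $(2n+2\kappa) \times \kappa$. Then: (1) $\overline{B} \cdot \overline{A} = 0$, and (2) for every tuple $(v_1, \dots, v_m)$ with each $v_i \in k^2 \setminus \{0\}$,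 the matrices $\overline{A}$ and $\overline{B}$ evaluated at $\alpha_{i,s} = (v_i)_s$ both have rank $\kappa$. -/
lemma stB_map {R S : Type} [CommRing R] [CommRing S] (f : R →+* S) (n κ : ℕ)
    (x y : Fin (n + 1) → R) :
    (spindlerTrautmannB n κ x y).map f =
      spindlerTrautmannB n κ (fun j => f (x j)) (fun j => f (y j)) := by
  ext i j
  simp only [spindlerTrautmannB, Matrix.map_apply, Matrix.of_apply]
  split_ifs <;> simp

lemma stA_eq {R : Type} [CommRing R] (n κ : ℕ) (x y : Fin (n + 1) → R) :
    spindlerTrautmannA n κ x y =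
      (spindlerTrautmannB n κ (fun j => - y j) x).transpose := by
  ext i j
  simp only [spindlerTrautmannA, spindlerTrautmannB, Matrix.transpose_apply, Matrix.of_apply]

lemma stBA {R : Type} [CommRing R] (n κ : ℕ) (x y : Fin (n + 1) → R)
    (h : ∀ a b, x a * y b = y a * x b) :
    spindlerTrautmannB n κ x y * spindlerTrautmannA n κ x y = 0 := by
  ext i j
  rw [Matrix.mul_apply, Matrix.zero_apply,
    ← (finCongr (show (n + κ) + (n + κ) = 2 * n + 2 * κ by omega)).sum_comp,
    Fin.sum_univ_add, ← Finset.sum_add_distrib]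
  refine Finset.sum_eq_zero fun s _ => ?_
  have hs := s.2
  simp only [spindlerTrautmannA, spindlerTrautmannB, Matrix.of_apply, finCongr_apply,
    Fin.val_cast, Fin.val_castAdd, Fin.val_natAdd, Nat.add_sub_cancel_left, hs, true_and,
    Nat.le_add_right, not_le.mpr hs, false_and, dite_false, not_lt.mpr (Nat.le_add_right (n+κ) (s:ℕ))]
  split_ifs <;> simp [h]

lemma stB_vecMul {k : Type} [Field k] (n κ N : ℕ) (M : Matrix (Fin κ) (Fin N) k)
    (e : Fin κ → Fin N) (h0 : ∀ i j, j < i → M i (e j) = 0) (h1 : ∀ i, M i (e i) ≠ 0) :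
    M.rank = κ := by
  have hdet : (M.submatrix id e).det ≠ 0 := by
    rw [Matrix.det_of_upperTriangular]
    · exact Finset.prod_ne_zero_iff.mpr fun i _ => h1 i
    · intro i j hij
      exact h0 i j hij
  have hli : LinearIndependent k M.row := by
    rw [← Matrix.vecMul_injective_iff]
    refine (injective_iff_map_eq_zero M.vecMulLinear).mpr fun c hc => ?_
    refine Matrix.eq_zero_of_vecMul_eq_zero hdet ?_
    ext j
    exact congrFun hc (e j)
  simpa using hli.rank_matrix

lemma stB_rank {k : Type} [Field k] (n κ : ℕ) (x y : Fin (n + 1) → k)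
    (h : (∃ j, x j ≠ 0) ∨ (∃ j, y j ≠ 0)) : (spindlerTrautmannB n κ x y).rank = κ := by
  have key : ∀ z : Fin (n + 1) → k, (∃ j, z j ≠ 0) →
      ∃ p : Fin (n + 1), z p ≠ 0 ∧ ∀ q < p, z q = 0 := by
    intro z hz
    obtain ⟨p, hp, hmin⟩ := WellFounded.has_min (wellFounded_lt (α := Fin (n + 1)))
      {j | z j ≠ 0} hz
    exact ⟨p, hp, fun q hq => by_contra fun hh => hmin q hh hq⟩
  rcases h with h | h
  · obtain ⟨p, hp, hq⟩ := key x h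
    have hpn := p.2
    refine stB_vecMul n κ _ _ (fun i => ⟨i + p, by omega⟩) ?_ ?_
    · intro i j hij
      have hij' : (j : ℕ) < i := hij
      have := i.2
      simp only [spindlerTrautmannB, Matrix.of_apply]
      split_ifs with h1 h2
      · apply hq; rw [Fin.lt_def]; dsimp only; omega
      · omega
      · rfl
    · intro i
      have := i.2
      simp only [spindlerTrautmannB, Matrix.of_apply]
      rw [dif_pos (by omega)]
      simpa using hp
  · obtain ⟨p, hp, hq⟩ := key y h
    have hpn := p.2
    refine stB_vecMul n κ _ _ (fun i => ⟨(n + κ) + (i + p), by omega⟩) ?_ ?_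
    · intro i j hij
      have hij' : (j : ℕ) < i := hij
      have := i.2
      simp only [spindlerTrautmannB, Matrix.of_apply]
      split_ifs with h1 h2
      · omega
      · apply hq; rw [Fin.lt_def]; dsimp only; omega
      · rfl
    · intro i
      have := i.2
      simp only [spindlerTrautmannB, Matrix.of_apply]
      rw [dif_neg (by omega), dif_pos (by omega)]
      simpa using hp

/-- **Monads on `ℙ¹ × ⋯ × ℙ¹` (m factors).** With `n = 2^(m-1) - 1` and the
multidegree-`(1,…,1)` monomials `x_j = α_{1,0} ∏_{l=2}^m α_{l,b_l(j)}`,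
`y_j = α_{1,1} ∏_{l=2}^m α_{l,b_l(j)}` (where `b_l(j) = (j / 2^(m-l)) % 2` is the
binary digit of `j` of weight `2^(m-l)`), the banded matrices `B̄ = B(x,y)` and
`Ā = A(x,y)` satisfy `B̄ ⬝ Ā = 0` and, at every tuple `(v_1,…,v_m)` of nonzero vectors
`v_i ∈ k² \ {0}`, both evaluate to matrices of rank `κ`: they give a linear monad
`0 → 𝒪_X(-1,…,-1)^κ → 𝒪_X^{2n+2κ} → 𝒪_X(1,…,1)^κ → 0` on `X = ℙ¹ × ⋯ × ℙ¹`. -/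
theorem monad_on_P1s_exists
    (k : Type) [Field k] (m κ : ℕ) (hm : 1 ≤ m) (hκ : 1 ≤ κ)
    (n : ℕ) (hn : n = 2 ^ (m - 1) - 1)
    (x y : Fin (n + 1) → MvPolynomial (Fin m × Fin 2) k)
    (hx : ∀ j : Fin (n + 1), x j = ∏ i : Fin m, MvPolynomial.X
      (i, if (i : ℕ) = 0 then 0 else
        if ((j : ℕ) / 2 ^ (m - 1 - (i : ℕ))) % 2 = 1 then 1 else 0))
    (hy : ∀ j : Fin (n + 1), y j = ∏ i : Fin m, MvPolynomial.X
      (i, if (i : ℕ) = 0 then 1 else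
        if ((j : ℕ) / 2 ^ (m - 1 - (i : ℕ))) % 2 = 1 then 1 else 0)) :
    spindlerTrautmannB n κ x y * spindlerTrautmannA n κ x y = 0 ∧
    ∀ v : Fin m → Fin 2 → k, (∀ i, v i ≠ 0) →
      ((spindlerTrautmannA n κ x y).map (MvPolynomial.eval (fun p => v p.1 p.2))).rank = κ ∧
      ((spindlerTrautmannB n κ x y).map (MvPolynomial.eval (fun p => v p.1 p.2))).rank = κ := by
  refine ⟨stBA n κ x y ?_, ?_⟩
  · intro a b
    rw [hx, hy, hx, hy, ← Finset.prod_mul_distrib, ← Finset.prod_mul_distrib]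
    refine Finset.prod_congr rfl fun i _ => ?_
    by_cases hi : (i : ℕ) = 0
    · simp only [hi, if_true]; ring
    · simp only [hi, if_false]
  · intro v hv
    have hex : (∃ j, MvPolynomial.eval (fun p => v p.1 p.2) (x j) ≠ 0) ∨
        (∃ j, MvPolynomial.eval (fun p => v p.1 p.2) (y j) ≠ 0) := by
      have hc : ∀ i, ∃ c : Fin 2, v i c ≠ 0 := fun i => Function.ne_iff.mp (hv i)
      choose c hc using hc
      let b : Fin (m - 1) → Bool := fun t => decide (c ⟨m - 1 - t, by omega⟩ = 1)
      have hlt : Nat.ofBits b < n + 1 := by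
        have := Nat.ofBits_lt_two_pow b
        omega
      have hdig : ∀ i : Fin m, (i : ℕ) ≠ 0 →
          (if (Nat.ofBits b / 2 ^ (m - 1 - (i : ℕ))) % 2 = 1 then (1 : Fin 2) else 0) = c i := by
        intro i hi
        have h1 : m - 1 - (i : ℕ) < m - 1 := by omega
        have h2 := Nat.testBit_ofBits_lt b _ h1
        rw [Nat.testBit_eq_decide_div_mod_eq] at h2
        have h3 : (⟨m - 1 - (m - 1 - (i : ℕ)), by omega⟩ : Fin m) = i := by
          ext; dsimp only; omega
        simp only [b, h3, decide_eq_decide] at h2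
        rw [if_congr h2 rfl rfl]
        split_ifs with h4
        · exact h4.symm
        · omega
      have hz : c ⟨0, hm⟩ = 0 ∨ c ⟨0, hm⟩ = 1 := by omega
      rcases hz with hz | hz
      · left
        refine ⟨⟨Nat.ofBits b, hlt⟩, ?_⟩
        rw [hx, map_prod]
        refine Finset.prod_ne_zero_iff.mpr fun i _ => ?_
        rw [MvPolynomial.eval_X]
        by_cases hi : (i : ℕ) = 0
        · have : i = ⟨0, hm⟩ := Fin.ext hi
          subst this
          simpa [hz] using hc ⟨0, hm⟩
        · simp only [hi, if_false, hdig i hi]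
          exact hc i
      · right
        refine ⟨⟨Nat.ofBits b, hlt⟩, ?_⟩
        rw [hy, map_prod]
        refine Finset.prod_ne_zero_iff.mpr fun i _ => ?_
        rw [MvPolynomial.eval_X]
        by_cases hi : (i : ℕ) = 0
        · have : i = ⟨0, hm⟩ := Fin.ext hi
          subst this
          simpa [hz] using hc ⟨0, hm⟩
        · simp only [hi, if_false, hdig i hi]
          exact hc i
    constructor
    · rw [stA_eq, Matrix.transpose_map, Matrix.rank_transpose, stB_map]
      apply stB_rank
      rcases hex with h | h
      · exact Or.inr h
      · left
        simpa using h
    · rw [stB_map]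
      exact stB_rank n κ _ _ hex
end
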